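/- arXiv:2511.04430 — 3 statements merged into one kernel-verified Lean document; each statement's English description precedes it below -/
import Mathlib

section
/- Let N, L_x, L_y be positive integers, a an integer, and N_a the largest divisor of N coprime to a. Then the cardinality of the quotient ring R_N ⧸ Ideal.span {(X − a)(X − 1), (Y − a)(Y − 1), X^{L_x} − 1, Y^{L_y} − 1} equals N · gcd(N_a, G_{L_x}) · gcd(N_a, G_{L_y}) · gcd(N_a, G_{L_x}, G_{L_y}), where G_L = ∑_{m=0}^{L−1} a^m. Consequently, the ground state degeneracy of the Delfino–Chamon–You model on an L_x × L_y torus is the square of this quantity. -/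
/-- The Laurent polynomial ring `(ZMod N)[X^{±1}, Y^{±1}]`. -/
abbrev RR (N : ℕ) : Type := AddMonoidAlgebra (ZMod N) (ℤ × ℤ)

/-- The monomial `X`. -/
noncomputable def Xv (N : ℕ) : RR N := AddMonoidAlgebra.single ((1 : ℤ), (0 : ℤ)) 1

/-- The monomial `Y`. -/
noncomputable def Yv (N : ℕ) : RR N := AddMonoidAlgebra.single ((0 : ℤ), (1 : ℤ)) 1

/-- A root `x` of `(x - a) * (x - 1)` satisfies `x ^ L - 1 = (1 + a + ⋯ + a ^ (L - 1)) * (x - 1)`. -/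
theorem pow_sub_one_eq_geom_sum_mul {S : Type*} [CommRing S] {x a : S}
    (h : (x - a) * (x - 1) = 0) (L : ℕ) :
    x ^ L - 1 = (∑ m ∈ Finset.range L, a ^ m) * (x - 1) := by
  have key : ∀ m : ℕ, x ^ m * (x - 1) = a ^ m * (x - 1) := by
    intro m
    induction m with
    | zero => simp
    | succ m ih => linear_combination x * ih + a ^ m * h
  rw [← geom_sum_mul, Finset.sum_mul, Finset.sum_mul]
  exact Finset.sum_congr rfl fun m _ => key m

theorem isCoprime_geom_sum (a : ℤ) {L : ℕ} (hL : 0 < L) :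
    IsCoprime (∑ m ∈ Finset.range L, a ^ m) a := by
  obtain ⟨L, rfl⟩ := Nat.exists_eq_add_one.mpr hL
  refine ⟨1, -∑ m ∈ Finset.range L, a ^ m, ?_⟩
  rw [geom_sum_succ]
  ring

/-- If `M` is the largest divisor of `N` coprime to `a`, then `M` and `N` have the same greatest
common divisor with every integer coprime to `a`. -/
theorem gcd_largest_coprime_divisor {N M : ℕ} (hN : 0 < N) {a G : ℤ} (hdvd : M ∣ N)
    (hcop : IsCoprime (M : ℤ) a)
    (hmax : ∀ d : ℕ, d ∣ N → IsCoprime (d : ℤ) a → d ≤ M) (hG : IsCoprime G a) :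
    Int.gcd M G = Int.gcd N G := by
  have hd : IsCoprime ((Int.gcd N G : ℕ) : ℤ) a :=
    hG.of_isCoprime_of_dvd_left (Int.gcd_dvd_right _ _)
  have hdN : Int.gcd N G ∣ N := Int.natCast_dvd_natCast.mp (Int.gcd_dvd_left _ _)
  have hlN : Nat.lcm M (Int.gcd N G) ∣ N := Nat.lcm_dvd hdvd hdN
  have hl : IsCoprime ((Nat.lcm M (Int.gcd N G) : ℕ) : ℤ) a :=
    (hcop.mul_left hd).of_isCoprime_of_dvd_left (by exact_mod_cast Nat.lcm_dvd_mul _ _)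
  have hle := hmax _ hlN hl
  have heq : Nat.lcm M (Int.gcd N G) = M :=
    le_antisymm hle (Nat.le_of_dvd (Nat.pos_of_dvd_of_pos hlN hN) (Nat.dvd_lcm_left _ _))
  have hdM : Int.gcd N G ∣ M := heq ▸ Nat.dvd_lcm_right M (Int.gcd N G)
  refine Nat.dvd_antisymm ?_ ?_
  · exact Int.dvd_gcd ((Int.gcd_dvd_left _ _).trans (by exact_mod_cast hdvd)) (Int.gcd_dvd_right _ _)
  · exact Int.dvd_gcd (by exact_mod_cast hdM) (Int.gcd_dvd_right _ _)

/-- Elements of finite order `x`, `y` of a `ZMod N`-algebra are the images of `X`, `Y`. -/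
theorem exists_algHom_of_pow_eq_one {N Lx Ly : ℕ} {S : Type*} [CommRing S] [Algebra (ZMod N) S]
    (hLx : 0 < Lx) (hLy : 0 < Ly) {x y : S} (hx : x ^ Lx = 1) (hy : y ^ Ly = 1) :
    ∃ F : RR N →ₐ[ZMod N] S, F (Xv N) = x ∧ F (Yv N) = y := by
  let ux : Sˣ := Units.ofPowEqOne x Lx hx hLx.ne'
  let uy : Sˣ := Units.ofPowEqOne y Ly hy hLy.ne'
  let φ : Multiplicative (ℤ × ℤ) →* S :=
    { toFun := fun m => ((ux ^ m.toAdd.1 * uy ^ m.toAdd.2 : Sˣ) : S)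
      map_one' := by simp
      map_mul' := fun m n => by
        rw [← Units.val_mul]
        congr 1
        simp only [toAdd_mul, Prod.fst_add, Prod.snd_add, zpow_add]
        exact mul_mul_mul_comm _ _ _ _ }
  refine ⟨AddMonoidAlgebra.lift (ZMod N) S (ℤ × ℤ) φ, ?_, ?_⟩
  · simp [Xv, AddMonoidAlgebra.lift_single, φ, ux]
  · simp [Yv, AddMonoidAlgebra.lift_single, φ, uy]

/-- A subring containing the images of `X` and `Y`, which have finite order, contains the image
of the whole Laurent polynomial ring. -/
theorem map_mem_of_pow_eq_one {N Lx Ly : ℕ} {Q : Type*} [CommRing Q] (π : RR N →+* Q)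
    (hLx : 0 < Lx) (hLy : 0 < Ly) (hx : π (Xv N) ^ Lx = 1) (hy : π (Yv N) ^ Ly = 1)
    (S : Subring Q) (hxS : π (Xv N) ∈ S) (hyS : π (Yv N) ∈ S) (z : RR N) : π z ∈ S := by
  have hinv : ∀ {w w' : Q} {L : ℕ}, 0 < L → w ^ L = 1 → w * w' = 1 → w ∈ S → w' ∈ S := by
    intro w w' L hL hw hww' hwS
    obtain ⟨L, rfl⟩ := Nat.exists_eq_add_one.mpr hL
    have : w' = w ^ L := by linear_combination w ^ L * hww' - w' * hw
    exact this ▸ pow_mem hwS L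
  have hmul : ∀ m n : ℤ × ℤ, π (.single (m + n) 1) = π (.single m 1) * π (.single n 1) := by
    intro m n
    rw [← map_mul, AddMonoidAlgebra.single_mul_single, one_mul]
  have hone : π (.single 0 1) = 1 := map_one π
  have hpow : ∀ m : ℤ × ℤ, π (.single m 1) ∈ S → π (.single (-m) 1) ∈ S →
      ∀ k : ℤ, π (.single (k • m) 1) ∈ S := by
    intro m hm hm' k
    induction k with
    | zero => simp [hone]
    | succ k ih => rw [add_smul, one_smul, hmul]; exact mul_mem ih hm
    | pred k ih => rw [sub_smul, one_smul, sub_eq_add_neg, hmul]; exact mul_mem ih hm'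
  have hX := hpow (1, 0) hxS
    (hinv hLx hx (by rw [Xv, ← hmul, add_neg_cancel, hone]) hxS)
  have hY := hpow (0, 1) hyS
    (hinv hLy hy (by rw [Yv, ← hmul, add_neg_cancel, hone]) hyS)
  induction z using AddMonoidAlgebra.induction_linear with
  | zero => simp
  | add z w hz hw => rw [map_add]; exact add_mem hz hw
  | single m r =>
    have hr : (AddMonoidAlgebra.single m r : RR N) = r.cast (R := ℤ) • .single m 1 := by
      rw [AddMonoidAlgebra.smul_single]
      simp
    have hm : m = m.1 • ((1 : ℤ), (0 : ℤ)) + m.2 • ((0 : ℤ), (1 : ℤ)) := by ext <;> simp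
    rw [hr, map_zsmul, hm, hmul]
    exact zsmul_mem (mul_mem (hX _) (hY _)) _

/-- The subring of elements `p + q u + r v + s u v` with integers `p, q, r, s`, where
`u ^ 2 = b u` and `v ^ 2 = b v`. -/
def bilinearSubring {Q : Type*} [CommRing Q] (u v : Q) (b : ℤ) (hu : u ^ 2 = b * u)
    (hv : v ^ 2 = b * v) : Subring Q where
  carrier := {z | ∃ p q r s : ℤ, z = p + q * u + r * v + s * (u * v)}
  zero_mem' := ⟨0, 0, 0, 0, by simp⟩
  one_mem' := ⟨1, 0, 0, 0, by simp⟩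
  neg_mem' := by
    rintro _ ⟨p, q, r, s, rfl⟩
    exact ⟨-p, -q, -r, -s, by push_cast; ring⟩
  add_mem' := by
    rintro _ _ ⟨p, q, r, s, rfl⟩ ⟨p', q', r', s', rfl⟩
    exact ⟨p + p', q + q', r + r', s + s', by push_cast; ring⟩
  mul_mem' := by
    rintro _ _ ⟨p, q, r, s, rfl⟩ ⟨p', q', r', s', rfl⟩
    refine ⟨p * p', p * q' + q * p' + b * q * q', p * r' + r * p' + b * r * r',
      p * s' + s * p' + q * r' + r * q' + b * (q * s' + s * q' + r * s' + s * r') +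
        b ^ 2 * s * s', ?_⟩
    push_cast
    linear_combination (q * q' + (q * s' + s * q') * v + s * s' * v ^ 2) * hu +
      (r * r' + (r * s' + s * r') * u + b * s * s' * u) * hv

/-- The free rank-four algebra over `ZMod N` on `1, u, v, u v` with `u ^ 2 = (a - 1) u` and
`v ^ 2 = (a - 1) v`. -/
abbrev BiquadraticAlgebra (N : ℕ) (a : ℤ) : Type :=
  QuadraticAlgebra (QuadraticAlgebra (ZMod N) 0 ((a : ZMod N) - 1)) 0
    ((a : QuadraticAlgebra (ZMod N) 0 ((a : ZMod N) - 1)) - 1)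

namespace BiquadraticAlgebra

variable (N : ℕ) (a : ℤ)

/-- The first generator. -/
def u : BiquadraticAlgebra N a := ⟨⟨0, 1⟩, 0⟩

/-- The second generator. -/
def v : BiquadraticAlgebra N a := ⟨0, ⟨1, 0⟩⟩

theorem u_sq : (1 + u N a - a) * u N a = 0 := by
  ext <;> simp [u, QuadraticAlgebra.re_one, QuadraticAlgebra.im_one]

theorem v_sq : (1 + v N a - a) * v N a = 0 := by
  ext <;> simp [v, QuadraticAlgebra.re_one, QuadraticAlgebra.im_one]

/-- The coordinates with respect to `1, u, v, u v`, reduced modulo divisors of `N`. -/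
def coords {N : ℕ} (a : ℤ) {k l m : ℕ} (hk : k ∣ N) (hl : l ∣ N) (hm : m ∣ N) :
    BiquadraticAlgebra N a →+ ZMod N × ZMod k × ZMod l × ZMod m where
  toFun z := (z.re.re, ZMod.castHom hk _ z.re.im, ZMod.castHom hl _ z.im.re,
    ZMod.castHom hm _ z.im.im)
  map_zero' := by simp
  map_add' z w := by simp [-ZMod.castHom_apply]

theorem coords_eq_zero_of_mem_span {k l : ℕ} (hk : k ∣ N) (hl : l ∣ N)
    (hm : Nat.gcd k l ∣ N) {G H : ℤ} (hG : (k : ℤ) ∣ G) (hH : (l : ℤ) ∣ H)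
    {z : BiquadraticAlgebra N a}
    (hz : z ∈ Ideal.span {(G : BiquadraticAlgebra N a) * u N a,
      (H : BiquadraticAlgebra N a) * v N a}) :
    coords a hk hl hm z = 0 := by
  have h1 : (G : ZMod k) = 0 := (ZMod.intCast_zmod_eq_zero_iff_dvd _ _).2 hG
  have h2 : (H : ZMod l) = 0 := (ZMod.intCast_zmod_eq_zero_iff_dvd _ _).2 hH
  have h3 : (G : ZMod (Nat.gcd k l)) = 0 := (ZMod.intCast_zmod_eq_zero_iff_dvd _ _).2
    ((Int.natCast_dvd_natCast.2 (Nat.gcd_dvd_left k l)).trans hG)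
  have h4 : (H : ZMod (Nat.gcd k l)) = 0 := (ZMod.intCast_zmod_eq_zero_iff_dvd _ _).2
    ((Int.natCast_dvd_natCast.2 (Nat.gcd_dvd_right k l)).trans hH)
  obtain ⟨α, β, rfl⟩ := Ideal.mem_span_pair.1 hz
  simp only [coords, AddMonoidHom.coe_mk, ZeroHom.coe_mk, Prod.mk_eq_zero]
  refine ⟨?_, ?_, ?_, ?_⟩ <;>
    simp [u, v, QuadraticAlgebra.re_one, QuadraticAlgebra.im_one, h1, h2, h3, h4,
      -ZMod.castHom_apply]

end BiquadraticAlgebra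

/-- The ideal defining the Delfino–Chamon–You model on an `Lx × Ly` torus. -/
noncomputable abbrev dcyIdeal (N Lx Ly : ℕ) (a : ℤ) : Ideal (RR N) :=
  Ideal.span {(Xv N - (a : RR N)) * (Xv N - 1), (Yv N - (a : RR N)) * (Yv N - 1),
    Xv N ^ Lx - 1, Yv N ^ Ly - 1}

section Quotient

variable {N Lx Ly : ℕ} {a : ℤ}

theorem mk_relations_dcyIdeal (N Lx Ly : ℕ) (a : ℤ) :
    let π := Ideal.Quotient.mk (dcyIdeal N Lx Ly a)
    (π (Xv N) - (a : RR N ⧸ dcyIdeal N Lx Ly a)) * (π (Xv N) - 1) = 0 ∧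
      (π (Yv N) - (a : RR N ⧸ dcyIdeal N Lx Ly a)) * (π (Yv N) - 1) = 0 ∧
      π (Xv N) ^ Lx = 1 ∧ π (Yv N) ^ Ly = 1 := by
  intro π
  have h : ∀ z ∈ ({(Xv N - (a : RR N)) * (Xv N - 1), (Yv N - (a : RR N)) * (Yv N - 1),
      Xv N ^ Lx - 1, Yv N ^ Ly - 1} : Set (RR N)), π z = 0 :=
    fun z hz => Ideal.Quotient.eq_zero_iff_mem.2 (Ideal.subset_span hz)
  simp only [Set.mem_insert_iff, Set.mem_singleton_iff, forall_eq_or_imp, forall_eq, map_mul,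
    map_sub, map_pow, map_one, map_intCast, sub_eq_zero (a := _ ^ _)] at h
  exact h

/-- Every class in the quotient is an integral combination of `1, X - 1, Y - 1` and
`(X - 1) (Y - 1)`. -/
theorem exists_eq_bilinear (hLx : 0 < Lx) (hLy : 0 < Ly) (z : RR N ⧸ dcyIdeal N Lx Ly a) :
    let π := Ideal.Quotient.mk (dcyIdeal N Lx Ly a)
    ∃ p q r s : ℤ, z = p + q * (π (Xv N) - 1) + r * (π (Yv N) - 1) +
      s * ((π (Xv N) - 1) * (π (Yv N) - 1)) := by
  intro π
  obtain ⟨hX, hY, hXL, hYL⟩ := mk_relations_dcyIdeal N Lx Ly a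
  obtain ⟨z, rfl⟩ := Ideal.Quotient.mk_surjective z
  exact map_mem_of_pow_eq_one π hLx hLy hXL hYL
    (bilinearSubring (π (Xv N) - 1) (π (Yv N) - 1) (a - 1)
      (by push_cast; linear_combination hX) (by push_cast; linear_combination hY))
    ⟨1, 1, 0, 0, by simp⟩ ⟨1, 0, 1, 0, by simp⟩ z

/-- The coefficients with respect to `1, X - 1, Y - 1, (X - 1) (Y - 1)` are well defined modulo
`N`, `k`, `l` and `gcd k l`. -/
theorem exists_coords (hLx : 0 < Lx) (hLy : 0 < Ly) {k l : ℕ} (hk : k ∣ N) (hl : l ∣ N)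
    (hG : (k : ℤ) ∣ ∑ m ∈ Finset.range Lx, a ^ m) (hH : (l : ℤ) ∣ ∑ m ∈ Finset.range Ly, a ^ m) :
    let π := Ideal.Quotient.mk (dcyIdeal N Lx Ly a)
    ∃ f : (RR N ⧸ dcyIdeal N Lx Ly a) →+ ZMod N × ZMod k × ZMod l × ZMod (Nat.gcd k l),
      ∀ p q r s : ℤ, f (p + q * (π (Xv N) - 1) + r * (π (Yv N) - 1) +
        s * ((π (Xv N) - 1) * (π (Yv N) - 1))) =
          ((p : ZMod N), (q : ZMod k), (r : ZMod l), (s : ZMod (Nat.gcd k l))) := by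
  intro π
  have hm : Nat.gcd k l ∣ N := (Nat.gcd_dvd_left k l).trans hk
  set G := ∑ m ∈ Finset.range Lx, a ^ m with hGdef
  set H := ∑ m ∈ Finset.range Ly, a ^ m with hHdef
  let u := BiquadraticAlgebra.u N a
  let v := BiquadraticAlgebra.v N a
  let I : Ideal (BiquadraticAlgebra N a) := Ideal.span {(G : BiquadraticAlgebra N a) * u,
    (H : BiquadraticAlgebra N a) * v}
  let ρ := Ideal.Quotient.mk I
  have hGu : (G : BiquadraticAlgebra N a ⧸ I) * ρ u = 0 := by
    have : ρ (G * u) = 0 := Ideal.Quotient.eq_zero_iff_mem.2 (Ideal.subset_span (by simp))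
    simpa using this
  have hHv : (H : BiquadraticAlgebra N a ⧸ I) * ρ v = 0 := by
    have : ρ (H * v) = 0 := Ideal.Quotient.eq_zero_iff_mem.2 (Ideal.subset_span (by simp))
    simpa using this
  have hX : (1 + ρ u - a) * (1 + ρ u - 1) = 0 := by
    have := congrArg ρ (BiquadraticAlgebra.u_sq N a)
    simpa using this
  have hY : (1 + ρ v - a) * (1 + ρ v - 1) = 0 := by
    have := congrArg ρ (BiquadraticAlgebra.v_sq N a)
    simpa using this
  have hXL : (1 + ρ u) ^ Lx = 1 := by
    have := pow_sub_one_eq_geom_sum_mul hX Lx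
    rw [add_sub_cancel_left] at this
    push_cast [hGdef] at hGu
    exact sub_eq_zero.1 (this.trans hGu)
  have hYL : (1 + ρ v) ^ Ly = 1 := by
    have := pow_sub_one_eq_geom_sum_mul hY Ly
    rw [add_sub_cancel_left] at this
    push_cast [hHdef] at hHv
    exact sub_eq_zero.1 (this.trans hHv)
  obtain ⟨F, hFX, hFY⟩ := exists_algHom_of_pow_eq_one (N := N) hLx hLy hXL hYL
  have hF : ∀ z ∈ dcyIdeal N Lx Ly a, (F : RR N →+* BiquadraticAlgebra N a ⧸ I) z = 0 := by
    intro z hz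
    refine RingHom.mem_ker.1 (Ideal.span_le.2 ?_ hz)
    rintro w (rfl | rfl | rfl | rfl)
    · simpa [RingHom.mem_ker, hFX] using hX
    · simpa [RingHom.mem_ker, hFY] using hY
    · simp [RingHom.mem_ker, hFX, hXL]
    · simp [RingHom.mem_ker, hFY, hYL]
  let τ : (BiquadraticAlgebra N a ⧸ I) →+ ZMod N × ZMod k × ZMod l × ZMod (Nat.gcd k l) :=
    QuotientAddGroup.lift I.toAddSubgroup (BiquadraticAlgebra.coords a hk hl hm)
      fun z hz => BiquadraticAlgebra.coords_eq_zero_of_mem_span N a hk hl hm hG hH hz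
  have hτ : ∀ z, τ (ρ z) = BiquadraticAlgebra.coords a hk hl hm z := fun z => rfl
  let φ : (RR N ⧸ dcyIdeal N Lx Ly a) →+* BiquadraticAlgebra N a ⧸ I :=
    Ideal.Quotient.lift _ (F : RR N →+* _) hF
  have hφX : φ (π (Xv N)) = 1 + ρ u := hFX
  have hφY : φ (π (Yv N)) = 1 + ρ v := hFY
  refine ⟨τ.comp φ.toAddMonoidHom, fun p q r s => ?_⟩
  rw [AddMonoidHom.comp_apply]
  refine (congrArg τ (?_ : _ = ρ (p + q * u + r * v + s * (u * v)))).trans ?_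
  · simp [hφX, hφY]
  rw [hτ]
  simp [BiquadraticAlgebra.coords, u, v, BiquadraticAlgebra.u, BiquadraticAlgebra.v,
    -ZMod.castHom_apply]

theorem gcd_mul_eq_zero {S : Type*} [CommRing S] {m n : ℤ} {w : S} (hm : (m : S) * w = 0)
    (hn : (n : S) * w = 0) : ((Int.gcd m n : ℤ) : S) * w = 0 := by
  rw [Int.gcd_eq_gcd_ab]
  push_cast
  linear_combination (m.gcdA n : S) * hm + (m.gcdB n : S) * hn

theorem intCast_mul_eq_zero {S : Type*} [CommRing S] {k : ℕ} {q : ℤ} {w : S}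
    (hw : ((k : ℤ) : S) * w = 0) (hq : (q : ZMod k) = 0) : (q : S) * w = 0 := by
  obtain ⟨c, rfl⟩ := (ZMod.intCast_zmod_eq_zero_iff_dvd _ _).1 hq
  push_cast at hw ⊢
  linear_combination (c : S) * hw

theorem card_quotient_dcyIdeal (hLx : 0 < Lx) (hLy : 0 < Ly) :
    let k := Int.gcd N (∑ m ∈ Finset.range Lx, a ^ m)
    let l := Int.gcd N (∑ m ∈ Finset.range Ly, a ^ m)
    Nat.card (RR N ⧸ dcyIdeal N Lx Ly a) = N * k * l * Nat.gcd k l := by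
  intro k l
  have hk : k ∣ N := Int.natCast_dvd_natCast.1 (Int.gcd_dvd_left _ _)
  have hl : l ∣ N := Int.natCast_dvd_natCast.1 (Int.gcd_dvd_left _ _)
  obtain ⟨f, hf⟩ := exists_coords hLx hLy hk hl (Int.gcd_dvd_right _ _) (Int.gcd_dvd_right _ _)
  obtain ⟨hX, hY, hXL, hYL⟩ := mk_relations_dcyIdeal N Lx Ly a
  set x := Ideal.Quotient.mk (dcyIdeal N Lx Ly a) (Xv N)
  set y := Ideal.Quotient.mk (dcyIdeal N Lx Ly a) (Yv N)
  have hN0 : ((N : ℤ) : RR N ⧸ dcyIdeal N Lx Ly a) = 0 := by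
    rw [Int.cast_natCast, ← map_natCast (algebraMap (ZMod N) (RR N ⧸ dcyIdeal N Lx Ly a)),
      ZMod.natCast_self, map_zero]
  have hkx : ((k : ℤ) : RR N ⧸ dcyIdeal N Lx Ly a) * (x - 1) = 0 := by
    refine gcd_mul_eq_zero (by rw [hN0, zero_mul]) ?_
    push_cast
    rw [← pow_sub_one_eq_geom_sum_mul hX, hXL, sub_self]
  have hly : ((l : ℤ) : RR N ⧸ dcyIdeal N Lx Ly a) * (y - 1) = 0 := by
    refine gcd_mul_eq_zero (by rw [hN0, zero_mul]) ?_
    push_cast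
    rw [← pow_sub_one_eq_geom_sum_mul hY, hYL, sub_self]
  have hxy : ((Nat.gcd k l : ℤ) : RR N ⧸ dcyIdeal N Lx Ly a) * ((x - 1) * (y - 1)) = 0 := by
    rw [← Int.gcd_natCast_natCast]
    exact gcd_mul_eq_zero (by rw [← mul_assoc, hkx, zero_mul])
      (by rw [mul_left_comm, hly, mul_zero])
  have hbij : Function.Bijective f := by
    refine ⟨(injective_iff_map_eq_zero f).2 fun z hz => ?_, ?_⟩
    · obtain ⟨p, q, r, s, rfl⟩ := exists_eq_bilinear hLx hLy z
      rw [hf] at hz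
      simp only [Prod.mk_eq_zero] at hz
      obtain ⟨hp, hq, hr, hs⟩ := hz
      have hp' : (p : RR N ⧸ dcyIdeal N Lx Ly a) * 1 = 0 :=
        intCast_mul_eq_zero (by rw [hN0, zero_mul]) hp
      rw [← mul_one (p : RR N ⧸ dcyIdeal N Lx Ly a), hp', intCast_mul_eq_zero hkx hq,
        intCast_mul_eq_zero hly hr, intCast_mul_eq_zero hxy hs]
      simp
    · rintro ⟨p, q, r, s⟩
      obtain ⟨p, rfl⟩ := ZMod.intCast_surjective p
      obtain ⟨q, rfl⟩ := ZMod.intCast_surjective q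
      obtain ⟨r, rfl⟩ := ZMod.intCast_surjective r
      obtain ⟨s, rfl⟩ := ZMod.intCast_surjective s
      exact ⟨_, hf p q r s⟩
  rw [Nat.card_eq_of_bijective f hbij]
  simp only [Nat.card_prod, Nat.card_zmod]
  ring

end Quotient

/-- Ground state degeneracy of the Delfino–Chamon–You model on an `L_x × L_y` torus:
the quotient ring has cardinality
`N · gcd(N_a, G_{L_x}) · gcd(N_a, G_{L_y}) · gcd(N_a, G_{L_x}, G_{L_y})`. -/
theorem stmt15 (N Lx Ly : ℕ) (hN : 0 < N) (hLx : 0 < Lx) (hLy : 0 < Ly)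
    (a : ℤ) (Na : ℕ)
    (hNa_dvd : Na ∣ N) (hNa_cop : IsCoprime (Na : ℤ) a)
    (hNa_max : ∀ d : ℕ, d ∣ N → IsCoprime ((d : ℤ)) a → d ≤ Na) :
    Nat.card (RR N ⧸ Ideal.span
        {(Xv N - (a : RR N)) * (Xv N - 1), (Yv N - (a : RR N)) * (Yv N - 1),
          Xv N ^ Lx - 1, Yv N ^ Ly - 1}) =
      N * Int.gcd (Na : ℤ) (∑ m ∈ Finset.range Lx, a ^ m) *
        Int.gcd (Na : ℤ) (∑ m ∈ Finset.range Ly, a ^ m) *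
        Int.gcd (Na : ℤ)
          (Int.gcd (∑ m ∈ Finset.range Lx, a ^ m) (∑ m ∈ Finset.range Ly, a ^ m)) := by
  have hG := isCoprime_geom_sum a hLx
  have hH := isCoprime_geom_sum a hLy
  have hx := gcd_largest_coprime_divisor hN hNa_dvd hNa_cop hNa_max hG
  have hy := gcd_largest_coprime_divisor hN hNa_dvd hNa_cop hNa_max hH
  have hxy : Int.gcd (Na : ℤ)
      (Int.gcd (∑ m ∈ Finset.range Lx, a ^ m) (∑ m ∈ Finset.range Ly, a ^ m)) =
      Nat.gcd (Int.gcd Na (∑ m ∈ Finset.range Lx, a ^ m))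
        (Int.gcd Na (∑ m ∈ Finset.range Ly, a ^ m)) := by
    simp only [Int.gcd_def, Int.natAbs_natCast]
    ac_rfl
  rw [hxy, hx, hy]
  exact card_quotient_dcyIdeal hLx hLy
end

section
/- Let N, L_x, L_y be positive integers and f, g ∈ R_N such that BB_N(f,g) is topological. Suppose l_x is the least positive integer with X^{l_x} − 1 ∈ Ideal.span {f, g} and l_y is the least positive integer with Y^{l_y} − 1 ∈ Ideal.span {f, g}. Then the cardinality of R_N ⧸ Ideal.span {f, g, X^{L_x} − 1, Y^{L_y} − 1} equals the cardinality of R_N ⧸ Ideal.span {f, g, X^{gcd(L_x, l_x)} − 1, Y^{gcd(L_y, l_y)} − 1}; that is, the ground state degeneracy satisfies GSD(L_x, L_y) = GSD(gcd(L_x, l_x), gcd(L_y, l_y)). -/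
/-- The code `BB_N(f,g)` is topological. -/
def IsTopological {N : ℕ} (f g : RR N) : Prop :=
  ∀ r s : RR N, r * f + s * g = 0 → ∃ h : RR N, r = h * g ∧ s = -(h * f)

/-- An ideal contains `a ^ gcd m n - 1` iff it contains both `a ^ m - 1` and `a ^ n - 1`. -/
theorem Ideal.pow_gcd_sub_one_mem_iff {R : Type*} [CommRing R] {I : Ideal R} {a : R} {m n : ℕ} :
    a ^ Nat.gcd m n - 1 ∈ I ↔ a ^ m - 1 ∈ I ∧ a ^ n - 1 ∈ I := by
  simp only [← Ideal.Quotient.mk_eq_mk_iff_sub_mem, map_pow, map_one, pow_gcd_eq_one]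

/-- Exponents of periodicity relations may be replaced by their greatest common divisors with
the periods already present in the ideal. -/
theorem Ideal.span_pow_sub_one_eq_span_pow_gcd_sub_one {R : Type*} [CommRing R]
    {f g a b : R} {k l : ℕ} (ha : a ^ k - 1 ∈ Ideal.span {f, g})
    (hb : b ^ l - 1 ∈ Ideal.span {f, g}) (m n : ℕ) :
    Ideal.span {f, g, a ^ m - 1, b ^ n - 1} =
      Ideal.span {f, g, a ^ Nat.gcd m k - 1, b ^ Nat.gcd n l - 1} := by
  have hle (u v : R) : Ideal.span {f, g} ≤ Ideal.span {f, g, u, v} :=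
    Ideal.span_mono (by grind)
  have hmem (u v : R) : ∀ z ∈ ({f, g, u, v} : Set R), z ∈ Ideal.span {f, g, u, v} :=
    fun _ hz => Ideal.subset_span hz
  apply le_antisymm <;> rw [Ideal.span_le] <;> rintro z (rfl | rfl | rfl | rfl)
  · exact hmem _ _ _ (by simp)
  · exact hmem _ _ _ (by simp)
  · exact ((Ideal.pow_gcd_sub_one_mem_iff (n := k)).mp (hmem _ _ _ (by simp))).1
  · exact ((Ideal.pow_gcd_sub_one_mem_iff (n := l)).mp (hmem _ _ _ (by simp))).1
  · exact hmem _ _ _ (by simp)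
  · exact hmem _ _ _ (by simp)
  · exact Ideal.pow_gcd_sub_one_mem_iff.mpr ⟨hmem _ _ _ (by simp), hle _ _ ha⟩
  · exact Ideal.pow_gcd_sub_one_mem_iff.mpr ⟨hmem _ _ _ (by simp), hle _ _ hb⟩

/-- `GSD(L_x, L_y) = GSD(gcd(L_x, l_x), gcd(L_y, l_y))` where `l_x`, `l_y` are the anyon
periodicities of a topological code `BB_N(f,g)`. -/
theorem stmt18 (N Lx Ly : ℕ) (hN : 0 < N) (hLx : 0 < Lx) (hLy : 0 < Ly)
    (f g : RR N) (htopo : IsTopological f g)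
    (lx : ℕ) (hlx_pos : 0 < lx) (hlx_mem : Xv N ^ lx - 1 ∈ Ideal.span {f, g})
    (hlx_min : ∀ m : ℕ, 0 < m → Xv N ^ m - 1 ∈ Ideal.span {f, g} → lx ≤ m)
    (ly : ℕ) (hly_pos : 0 < ly) (hly_mem : Yv N ^ ly - 1 ∈ Ideal.span {f, g})
    (hly_min : ∀ m : ℕ, 0 < m → Yv N ^ m - 1 ∈ Ideal.span {f, g} → ly ≤ m) :
    Nat.card (RR N ⧸ Ideal.span {f, g, Xv N ^ Lx - 1, Yv N ^ Ly - 1}) =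
      Nat.card (RR N ⧸ Ideal.span
        {f, g, Xv N ^ Nat.gcd Lx lx - 1, Yv N ^ Nat.gcd Ly ly - 1}) := by
  rw [Ideal.span_pow_sub_one_eq_span_pow_gcd_sub_one hlx_mem hly_mem]
end

section
/- Let p be a prime, let c₀, c₂, d₀, d₂ be nonzero elements of ZMod p, and let (u₁, v₁), (u₂, v₂) ∈ ℤ × ℤ be exponent vectors with determinant u₁·v₂ − v₁·u₂ ≠ 0. Set f = c₀ + c₂·X^{u₁}Y^{v₁} and g = d₀ + d₂·X^{u₂}Y^{v₂} in R_p. Then the dimension of R_p ⧸ Ideal.span {f, g} as a vector space over ZMod p equals |u₁·v₂ − v₁·u₂|. In particular, for the binomial toric-layout code with f = c₀ + c₂·X^{−α}Y^{b} and g = d₀ + d₂·X^{a}Y^{−β}, the topological index is |αβ − ab|. -/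
open AddMonoidAlgebra in
/-- Let `ι : H →+ G` be injective and `χ` a character of `H`. Identifying, in the group algebra of
`G`, each monomial `ι h` with the scalar `χ h` leaves a free module of rank `[G : ι H]`; it is
enough to identify them for `h` in a generating set of `H`. -/
theorem finrank_quotient_span_single_sub_character {k G H : Type*} [CommRing k] [Nontrivial k]
    [AddCommGroup G] [AddCommGroup H] (ι : H →+ G) (hι : Function.Injective ι)
    (χ : H →+ Additive kˣ) (S : Set H) (hS : AddSubgroup.closure S = ⊤) :
    Module.finrank k (AddMonoidAlgebra k G ⧸ Ideal.span
      ((fun h => single (ι h) (1 : k) - single 0 ((χ h).toMul : k)) '' S)) = ι.range.index := by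
  set I := Ideal.span ((fun h => single (ι h) (1 : k) - single 0 ((χ h).toMul : k)) '' S)
  have rel (h : H) : single (ι h) (1 : k) - single 0 ((χ h).toMul : k) ∈ I := by
    have hh : h ∈ AddSubgroup.closure S := hS ▸ AddSubgroup.mem_top h
    induction hh using AddSubgroup.closure_induction with
    | mem x hx => exact Ideal.subset_span ⟨x, hx, rfl⟩
    | zero => simp
    | add x y _ _ hx hy =>
      convert I.add_mem (I.mul_mem_left (single (ι y) 1) hx)
        (I.mul_mem_left (single 0 ((χ x).toMul : k)) hy) using 1
      simp [mul_sub, single_mul_single, add_comm]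
    | neg x _ hx =>
      convert I.mul_mem_left (-(single (-ι x) (((χ x).toMul⁻¹ : kˣ) : k))) hx using 1
      simp [mul_sub, single_mul_single]
      abel
  have diff (g : G) : ∃ h : H, ι h = g - (QuotientAddGroup.mk g : G ⧸ ι.range).out := by
    have : -(QuotientAddGroup.mk g : G ⧸ ι.range).out + g ∈ ι.range :=
      QuotientAddGroup.eq.mp (QuotientAddGroup.out_eq' _)
    obtain ⟨h, hh⟩ := this
    exact ⟨h, by rw [hh]; abel⟩
  choose l hl using diff
  have mk_add (g : G) (h : H) :
      (QuotientAddGroup.mk (ι h + g) : G ⧸ ι.range) = QuotientAddGroup.mk g :=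
    QuotientAddGroup.eq.mpr ⟨-h, by simp⟩
  have l_add (g : G) (h : H) : l (ι h + g) = h + l g := by
    apply hι
    rw [map_add, hl, hl, mk_add]
    abel
  have l_out (q : G ⧸ ι.range) : l q.out = 0 := by
    apply hι
    rw [hl, QuotientAddGroup.out_eq']
    simp
  let φ : AddMonoidAlgebra k G →ₗ[k] (G ⧸ ι.range →₀ k) :=
    Finsupp.linearCombination k
      (fun g => Finsupp.single (QuotientAddGroup.mk g) ((χ (l g)).toMul : k)) ∘ₗ
      (coeffLinearEquiv k).toLinearMap
  have φ_single (g : G) (a : k) :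
      φ (single g a) = Finsupp.single (QuotientAddGroup.mk g) (a * ((χ (l g)).toMul : k)) := by
    simp [φ]
  let ψ : (G ⧸ ι.range →₀ k) →ₗ[k] AddMonoidAlgebra k G ⧸ I :=
    Finsupp.linearCombination k (fun q => Ideal.Quotient.mk I (single q.out 1))
  have ψφ (x : AddMonoidAlgebra k G) : ψ (φ x) = Ideal.Quotient.mk I x := by
    suffices ψ ∘ₗ φ = (Ideal.Quotient.mkₐ k I).toLinearMap from LinearMap.congr_fun this x
    ext g
    simp only [LinearMap.comp_apply, lsingle_apply, φ_single, ψ, one_mul,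
      Finsupp.linearCombination_single, AlgHom.toLinearMap_apply, Ideal.Quotient.mkₐ_eq_mk]
    rw [← Ideal.Quotient.mkₐ_eq_mk k, ← map_smul, Ideal.Quotient.mkₐ_eq_mk, eq_comm,
      Ideal.Quotient.eq]
    convert I.mul_mem_left (single (QuotientAddGroup.mk g : G ⧸ ι.range).out 1) (rel (l g)) using 1
    simp [mul_sub, single_mul_single, hl]
  have ker : LinearMap.ker φ = I.restrictScalars k := by
    apply le_antisymm
    · intro x hx
      have := ψφ x
      rw [LinearMap.mem_ker.mp hx, map_zero, eq_comm, Ideal.Quotient.eq_zero_iff_mem] at this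
      exact this
    · intro x hx
      suffices ∀ y, φ (y * x) = 0 by simpa using this 1
      refine Submodule.span_induction ?_ (by simp) (fun x y _ _ hx hy z => ?_)
        (fun a x _ hx z => ?_) hx
      · rintro _ ⟨h, -, rfl⟩ y
        induction y using AddMonoidAlgebra.induction_linear with
        | zero => simp
        | add x y hx hy => rw [add_mul, map_add, hx, hy, add_zero]
        | single g a =>
          rw [mul_sub, single_mul_single, single_mul_single, map_sub, φ_single, φ_single,
            add_comm g, mk_add, l_add]
          simp [mul_assoc]
      · rw [mul_add, map_add, hx, hy, add_zero]
      · rw [smul_eq_mul, ← mul_assoc, hx]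
  have surj : Function.Surjective φ := by
    intro y
    induction y using Finsupp.induction_linear with
    | zero => exact ⟨0, map_zero φ⟩
    | add x y hx hy =>
      obtain ⟨a, rfl⟩ := hx
      obtain ⟨b, rfl⟩ := hy
      exact ⟨a + b, map_add φ a b⟩
    | single q a => exact ⟨single q.out a, by simp [φ_single, l_out]⟩
  let e : (AddMonoidAlgebra k G ⧸ I) ≃ₗ[k] (G ⧸ ι.range →₀ k) :=
    (Submodule.Quotient.restrictScalarsEquiv k I).symm ≪≫ₗ
      Submodule.quotEquivOfEq _ _ ker.symm ≪≫ₗ φ.quotKerEquivOfSurjective surj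
  rw [e.finrank_eq, Module.finrank_eq_nat_card_basis (Finsupp.basisSingleOne), AddSubgroup.index]

open Module in
/-- The sublattice of `ℤ × ℤ` spanned by the columns of `M` has index `|det M|`. -/
theorem index_range_toLin_finTwoProd (M : Matrix (Fin 2) (Fin 2) ℤ)
    (hM : Function.Injective (Matrix.toLin (Basis.finTwoProd ℤ) (Basis.finTwoProd ℤ) M)) :
    (Matrix.toLin (Basis.finTwoProd ℤ) (Basis.finTwoProd ℤ) M).toAddMonoidHom.range.index =
      M.det.natAbs := by
  rw [← LinearMap.det_toLin (Basis.finTwoProd ℤ) M]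
  exact (Submodule.natAbs_det_equiv (LinearMap.range (Matrix.toLin _ _ M))
    (LinearEquiv.ofInjective _ hM)).symm

open AddMonoidAlgebra in
/-- Up to a unit, `a + b X^g` is `X^g - (-a / b)`. -/
theorem span_singleton_single_zero_add_single {k G : Type*} [Field k] [AddCommGroup G]
    (g : G) {a b : k} (hb : b ≠ 0) :
    Ideal.span {single (0 : G) a + single g b} =
      Ideal.span {single g (1 : k) - single 0 (-a / b)} := by
  have hu : IsUnit (single (0 : G) b) :=
    IsUnit.of_mul_eq_one (single 0 b⁻¹) (by simp [single_mul_single, hb, one_def])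
  rw [← Ideal.span_singleton_mul_left_unit hu (single g 1 - _)]
  congr 2
  simp [mul_add, single_mul_single, neg_div, mul_div_cancel₀ _ hb, add_comm]

/-- The topological index of the binomial code
`BB_p(c₀ + c₂ X^{u₁}Y^{v₁}, d₀ + d₂ X^{u₂}Y^{v₂})` is `|u₁v₂ - v₁u₂|`. -/
theorem stmt19 (p : ℕ) (hp : p.Prime) (c₀ c₂ d₀ d₂ : ZMod p)
    (hc₀ : c₀ ≠ 0) (hc₂ : c₂ ≠ 0) (hd₀ : d₀ ≠ 0) (hd₂ : d₂ ≠ 0)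
    (u₁ v₁ u₂ v₂ : ℤ) (hdet : u₁ * v₂ - v₁ * u₂ ≠ 0) :
    Module.finrank (ZMod p)
      (RR p ⧸ Ideal.span
        {AddMonoidAlgebra.single ((0 : ℤ), (0 : ℤ)) c₀ +
            AddMonoidAlgebra.single (u₁, v₁) c₂,
          AddMonoidAlgebra.single ((0 : ℤ), (0 : ℤ)) d₀ +
            AddMonoidAlgebra.single (u₂, v₂) d₂}) =
      (u₁ * v₂ - v₁ * u₂).natAbs := by
  have := Fact.mk hp
  let T := Matrix.toLin (Module.Basis.finTwoProd ℤ) (Module.Basis.finTwoProd ℤ)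
    !![u₁, u₂; v₁, v₂]
  have T_apply (x : ℤ × ℤ) : T x = (u₁ * x.1 + u₂ * x.2, v₁ * x.1 + v₂ * x.2) :=
    Matrix.toLin_finTwoProd_apply ..
  have T_inj : Function.Injective T := by
    rw [injective_iff_map_eq_zero]
    rintro ⟨x, y⟩ h
    rw [T_apply, Prod.mk_eq_zero] at h
    obtain ⟨h₁, h₂⟩ := h
    ext
    · exact (mul_eq_zero.mp (by linear_combination v₂ * h₁ - u₂ * h₂ :
        (u₁ * v₂ - v₁ * u₂) * x = 0)).resolve_left hdet
    · exact (mul_eq_zero.mp (by linear_combination u₁ * h₂ - v₁ * h₁ :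
        (u₁ * v₂ - v₁ * u₂) * y = 0)).resolve_left hdet
  let c : (ZMod p)ˣ := Units.mk0 (-c₀ / c₂) (div_ne_zero (neg_ne_zero.mpr hc₀) hc₂)
  let d : (ZMod p)ˣ := Units.mk0 (-d₀ / d₂) (div_ne_zero (neg_ne_zero.mpr hd₀) hd₂)
  let χ : ℤ × ℤ →+ Additive (ZMod p)ˣ :=
    (zmultiplesHom _ (Additive.ofMul c)).coprod (zmultiplesHom _ (Additive.ofMul d))
  have gen : AddSubgroup.closure {((1 : ℤ), (0 : ℤ)), (0, 1)} = ⊤ := by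
    exact eq_top_iff.mpr fun x _ => AddSubgroup.mem_closure_pair.mpr ⟨x.1, x.2, by simp⟩
  have T_fst : T.toAddMonoidHom (1, 0) = (u₁, v₁) := by simpa using T_apply (1, 0)
  have T_snd : T.toAddMonoidHom (0, 1) = (u₂, v₂) := by simpa using T_apply (0, 1)
  have χ_fst : ((χ (1, 0)).toMul : ZMod p) = -c₀ / c₂ := by simp [χ, c]
  have χ_snd : ((χ (0, 1)).toMul : ZMod p) = -d₀ / d₂ := by simp [χ, d]
  have key := finrank_quotient_span_single_sub_character T.toAddMonoidHom T_inj χ _ gen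
  rw [Set.image_pair, T_fst, T_snd, χ_fst, χ_snd, index_range_toLin_finTwoProd _ T_inj,
    Matrix.det_fin_two_of, mul_comm u₂] at key
  rw [← key, ← Prod.zero_eq_mk, Ideal.span_insert, span_singleton_single_zero_add_single _ hc₂,
    span_singleton_single_zero_add_single _ hd₂, ← Ideal.span_insert]
end
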